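/- Let ρ_1, ρ_2, ρ_3 ∈ ℂ be the three (distinct) complex roots of the polynomial x^3 + 2x − 1. Then for every integer n ≥ 1, the number of non-increasing vacillating parking functions of length n satisfies |VPF_n^↓| = Σ_{j=1}^{3} ((ρ_j^2 + ρ_j)/(3ρ_j^2 + 2)) · ρ_j^{−(n+1)}, the sum being a complex number equal to the natural number |VPF_n^↓|. -/

import Mathlib

/-- One car with (1-indexed) preference `p` attempts to park on a one-way street with
spots `1,…,n` under the `k`-vacillating rule, given the set `occ` of occupied spots:
it parks in spot `p` if unoccupied; otherwise in spot `p - k` if `p - k ≥ 1` and it is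
unoccupied; otherwise in spot `p + k` if `p + k ≤ n` and it is unoccupied; otherwise it
fails to park (`none`). -/
def parkStep (n k : ℕ) (occ : Finset ℕ) (p : ℕ) : Option ℕ :=
  if p ∉ occ then some p
  else if k < p ∧ p - k ∉ occ then some (p - k)
  else if p + k ≤ n ∧ p + k ∉ occ then some (p + k)
  else none

/-- Park the cars whose preference list is given, in order, under the `k`-vacillating
rule on a street with spots `1,…,n`, starting from occupied set `occ`.  Returns the list
of spots occupied by the cars (in the order the cars arrive), or `none` if some car
fails to park. -/
def parkAssign (n k : ℕ) (occ : Finset ℕ) : List ℕ → Option (List ℕ)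
  | [] => some []
  | p :: ps =>
    match parkStep n k occ p with
    | none => none
    | some s => (parkAssign n k (insert s occ) ps).map (s :: ·)

/-- The 1-indexed preference list in `[n]^m` associated to `α : Fin m → Fin n`
(car `i+1` prefers spot `α i + 1`). -/
def prefList {m n : ℕ} (α : Fin m → Fin n) : List ℕ :=
  List.ofFn fun i => (α i : ℕ) + 1

/-- The set of `k`-vacillating parking functions of length `n`:
preference lists in `[n]^n` (encoded as `Fin n → Fin n`) for which all `n` cars park. -/
def VPFk (n k : ℕ) : Finset (Fin n → Fin n) :=
  Finset.univ.filter fun α => (parkAssign n k ∅ (prefList α)).isSome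

/-- The set of vacillating parking functions of length `n` (the case `k = 1`). -/
def VPF (n : ℕ) : Finset (Fin n → Fin n) := VPFk n 1

/-- The set of non-increasing vacillating parking functions of length `n`. -/
def VPFdown (n : ℕ) : Finset (Fin n → Fin n) :=
  (VPF n).filter fun α => ∀ i j : Fin n, i ≤ j → α j ≤ α i

/-! Let the spots above `m` be taken and let `m` cars with non-increasing preferences arrive. The
first car cannot prefer more than `m + 1`; if it prefers `m + 1` or `m` it takes spot `m`, and the
problem shrinks by one. If it prefers less, a count of the reachable spots forces it to prefer
`m - 1`, and the next two cars as well: the three of them park in `m - 1`, `m - 2`, `m` (for `m = 2`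
only two cars are left, in spots `1`, `2`). The numbers `F m` of such lists hence satisfy
`F (m + 3) = 2 F (m + 2) + F m`, and `|VPF_n^↓| = F n - F (n - 1)`, since exactly the lists that
start with `n + 1` have to be discarded. The sums of residues of `x ^ j / (x ^ 3 + 2 x - 1)` satisfy
the same recurrence in `-j`, so comparing the values for `n ≤ 3` suffices. -/

section ParkingRule

variable {n k : ℕ} {occ : Finset ℕ} {p s : ℕ} {l : List ℕ}

theorem notMem_and_mem_Icc_of_parkStep_eq_some (hp : 1 ≤ p) (h : parkStep n k occ p = some s) :
    s ∉ occ ∧ s ∈ Finset.Icc 1 (p + k) := by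
  rw [Finset.mem_Icc]
  unfold parkStep at h
  split_ifs at h <;> simp only [Option.some.injEq] at h <;> subst h <;> grind

theorem isSome_parkAssign_cons :
    (parkAssign n k occ (p :: l)).isSome ↔
      ∃ s, parkStep n k occ p = some s ∧ (parkAssign n k (insert s occ) l).isSome := by
  rw [parkAssign]
  cases parkStep n k occ p <;> simp

theorem isSome_parkAssign_cons_of_eq_some (h : parkStep n k occ p = some s) :
    (parkAssign n k occ (p :: l)).isSome ↔ (parkAssign n k (insert s occ) l).isSome := by
  simp only [isSome_parkAssign_cons, h, Option.some.injEq, exists_eq_left']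

theorem length_add_card_le_of_isSome_parkAssign {c : ℕ} {S : Finset ℕ}
    (hl : ∀ x ∈ l, 1 ≤ x ∧ x ≤ c) (hS : S ⊆ occ) (hSc : S ⊆ Finset.Icc 1 (c + k))
    (h : (parkAssign n k occ l).isSome) : l.length + S.card ≤ c + k := by
  induction l generalizing occ S with
  | nil => simpa using Finset.card_le_card hSc
  | cons p l ih =>
    obtain ⟨⟨hp, hpc⟩, hl⟩ := List.forall_mem_cons.1 hl
    obtain ⟨s, hs, h⟩ := isSome_parkAssign_cons.1 h
    obtain ⟨hs_free, hs_mem⟩ := notMem_and_mem_Icc_of_parkStep_eq_some hp hs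
    have hsc : s ∈ Finset.Icc 1 (c + k) := Finset.Icc_subset_Icc_right (by omega) hs_mem
    have := ih hl (Finset.insert_subset_insert s hS) (Finset.insert_subset hsc hSc) h
    rw [Finset.card_insert_of_notMem (fun hsS => hs_free (hS hsS))] at this
    rw [List.length_cons]
    omega

end ParkingRule

/-- `l` is a non-increasing word of length `m` over the alphabet `[n] = {1, …, n}`: a non-increasing
preference list of `m` cars on a street with `n` spots. -/
structure IsNonincWord (m n : ℕ) (l : List ℕ) : Prop where
  length_eq : l.length = m
  pairwise : l.Pairwise (· ≥ ·)
  mem_bounds : ∀ x ∈ l, 1 ≤ x ∧ x ≤ n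

namespace IsNonincWord

variable {m n n' p : ℕ} {l : List ℕ}

theorem nil : IsNonincWord 0 n [] := ⟨rfl, .nil, by simp⟩

theorem mono (h : IsNonincWord m n l) (hn : n ≤ n') : IsNonincWord m n' l :=
  ⟨h.length_eq, h.pairwise, fun x hx => ⟨(h.mem_bounds x hx).1, (h.mem_bounds x hx).2.trans hn⟩⟩

theorem eq_nil (h : IsNonincWord 0 n l) : l = [] := List.length_eq_zero_iff.1 h.length_eq

theorem cons_iff :
    IsNonincWord (m + 1) n (p :: l) ↔ 1 ≤ p ∧ p ≤ n ∧ IsNonincWord m p l := by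
  constructor
  · rintro ⟨hlen, hpair, hmem⟩
    rw [List.pairwise_cons] at hpair
    rw [List.forall_mem_cons] at hmem
    exact ⟨hmem.1.1, hmem.1.2, Nat.succ_injective hlen, hpair.2,
      fun x hx => ⟨(hmem.2 x hx).1, hpair.1 x hx⟩⟩
  · rintro ⟨hp, hpn, h⟩
    exact ⟨congrArg (· + 1) h.length_eq,
      List.pairwise_cons.2 ⟨fun x hx => (h.mem_bounds x hx).2, h.pairwise⟩,
      List.forall_mem_cons.2 ⟨⟨hp, hpn⟩, (h.mono hpn).mem_bounds⟩⟩

theorem exists_eq_cons (h : IsNonincWord (m + 1) n l) : ∃ p t, l = p :: t :=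
  List.exists_cons_of_length_eq_add_one h.length_eq

theorem exists_eq_cons_of_le_mem (h : IsNonincWord (m + 1) n l) (hn : ∃ x ∈ l, n ≤ x) :
    ∃ t, l = n :: t := by
  obtain ⟨p, t, rfl⟩ := h.exists_eq_cons
  obtain ⟨-, hpn, ht⟩ := cons_iff.1 h
  obtain ⟨x, hx, hnx⟩ := hn
  have hxp : x ≤ p := by
    rcases List.mem_cons.1 hx with rfl | hx
    exacts [le_rfl, (ht.mem_bounds x hx).2]
  exact ⟨t, by rw [le_antisymm hpn (hnx.trans hxp)]⟩

end IsNonincWord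

/-- All cars with preference list `l` manage to park by the vacillating rule on a street with `n`
spots of which exactly the spots `m + 1, …, n` are taken beforehand. -/
def ParksBelow (n m : ℕ) (l : List ℕ) : Prop :=
  (parkAssign n 1 (Finset.Icc (m + 1) n) l).isSome

namespace ParksBelow

variable {n m k p : ℕ} {l : List ℕ}

theorem not_cons_of_lt (hp : m + 2 < p) (hpn : p ≤ n) : ¬ ParksBelow n (m + 1) (p :: l) := by
  have hstep : parkStep n 1 (Finset.Icc (m + 2) n) p = none := by
    simp only [parkStep, Finset.mem_Icc]
    grind
  simp [ParksBelow, isSome_parkAssign_cons, hstep]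

theorem cons_add_two_iff (hm : m + 2 ≤ n) :
    ParksBelow n (m + 1) ((m + 2) :: l) ↔ ParksBelow n m l := by
  have hstep : parkStep n 1 (Finset.Icc (m + 1 + 1) n) (m + 2) = some (m + 1) := by
    simp only [parkStep, Finset.mem_Icc]
    grind
  rw [ParksBelow, isSome_parkAssign_cons_of_eq_some hstep,
    Finset.insert_Icc_add_one_left_eq_Icc (by omega), ParksBelow]

theorem cons_add_one_iff (hm : m + 1 ≤ n) :
    ParksBelow n (m + 1) ((m + 1) :: l) ↔ ParksBelow n m l := by
  have hstep : parkStep n 1 (Finset.Icc (m + 1 + 1) n) (m + 1) = some (m + 1) := by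
    simp [parkStep]
  rw [ParksBelow, isSome_parkAssign_cons_of_eq_some hstep,
    Finset.insert_Icc_add_one_left_eq_Icc hm, ParksBelow]

theorem cons_iff_of_le (hp : p ≤ m) :
    ParksBelow n m (p :: l) ↔
      (parkAssign n 1 (insert p (Finset.Icc (m + 1) n)) l).isSome := by
  refine isSome_parkAssign_cons_of_eq_some ?_
  simp only [parkStep, Finset.mem_Icc]
  grind

theorem cons_cons_iff (hk : k + 2 ≤ m) :
    ParksBelow n m ((k + 2) :: (k + 2) :: l) ↔
      (parkAssign n 1 (insert (k + 1) (insert (k + 2) (Finset.Icc (m + 1) n))) l).isSome := by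
  rw [cons_iff_of_le hk]
  refine isSome_parkAssign_cons_of_eq_some ?_
  simp only [parkStep, Finset.mem_insert, Finset.mem_Icc]
  grind

theorem cons_cons_cons_iff (hk : k + 3 ≤ n) :
    ParksBelow n (k + 3) ((k + 2) :: (k + 2) :: (k + 2) :: l) ↔ ParksBelow n k l := by
  have hstep : parkStep n 1 (insert (k + 1) (insert (k + 2) (Finset.Icc (k + 4) n))) (k + 2) =
      some (k + 3) := by
    simp only [parkStep, Finset.mem_insert, Finset.mem_Icc]
    grind
  have hocc : insert (k + 3) (insert (k + 1) (insert (k + 2) (Finset.Icc (k + 4) n))) =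
      Finset.Icc (k + 1) n := by
    ext x
    simp only [Finset.mem_insert, Finset.mem_Icc]
    omega
  rw [cons_cons_iff (by omega), isSome_parkAssign_cons_of_eq_some hstep, hocc, ParksBelow]

theorem one_one (hn : 2 ≤ n) : ParksBelow n 2 [1, 1] := by
  have hstep : parkStep n 1 (insert 1 (Finset.Icc 3 n)) 1 = some 2 := by
    simp [parkStep, hn]
  rw [cons_iff_of_le (by omega), isSome_parkAssign_cons_of_eq_some hstep]
  rfl

/-- If the preferences in `l` were all below `m`, its `m` cars could only reach spots in `[1, m]`,
where `p` is already taken. -/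
theorem exists_eq_cons_of_cons (hl : IsNonincWord m p l) (hp : 1 ≤ p) (hpm : p ≤ m)
    (h : ParksBelow n (m + 1) (p :: l)) : p = m ∧ ∃ t, l = m :: t := by
  rw [cons_iff_of_le (by omega)] at h
  obtain ⟨m, rfl⟩ : ∃ i, m = i + 1 := ⟨m - 1, by omega⟩
  have hex : ∃ x ∈ l, m + 1 ≤ x := by
    by_contra! hlt
    have hle := length_add_card_le_of_isSome_parkAssign (c := m) (S := {p})
      (fun x hx => ⟨(hl.mem_bounds x hx).1, Nat.lt_succ_iff.1 (hlt x hx)⟩)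
      (by simp) (by simp; omega) h
    rw [hl.length_eq, Finset.card_singleton] at hle
    omega
  obtain rfl : p = m + 1 := by
    obtain ⟨x, hx, hmx⟩ := hex
    exact le_antisymm hpm (hmx.trans (hl.mem_bounds x hx).2)
  exact ⟨rfl, hl.exists_eq_cons_of_le_mem hex⟩

/-- If the preferences in `l` were all below `k + 2`, its `k + 1` cars could only reach spots in
`[1, k + 2]`, where `k + 1` and `k + 2` are already taken. -/
theorem exists_eq_cons_of_cons_cons (hl : IsNonincWord (k + 1) (k + 2) l)
    (h : ParksBelow n (k + 3) ((k + 2) :: (k + 2) :: l)) : ∃ t, l = (k + 2) :: t := by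
  rw [cons_cons_iff (by omega)] at h
  refine hl.exists_eq_cons_of_le_mem ?_
  by_contra! hlt
  have hle := length_add_card_le_of_isSome_parkAssign (c := k + 1) (S := {k + 1, k + 2})
    (fun x hx => ⟨(hl.mem_bounds x hx).1, Nat.lt_succ_iff.1 (hlt x hx)⟩)
    (by grind) (by grind) h
  rw [hl.length_eq, Finset.card_pair (by omega)] at hle
  omega

theorem one_one_or_exists_triple (hl : IsNonincWord m p l) (hp : 1 ≤ p) (hpm : p ≤ m)
    (h : ParksBelow n (m + 1) (p :: l)) :
    (m = 1 ∧ p :: l = [1, 1]) ∨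
      ∃ k, m = k + 2 ∧ ∃ t, IsNonincWord k (k + 2) t ∧ p :: l = m :: m :: m :: t := by
  obtain ⟨rfl, t, rfl⟩ := exists_eq_cons_of_cons hl hp hpm h
  match p, hp with
  | 1, _ =>
    obtain rfl := (IsNonincWord.cons_iff.1 hl).2.2.eq_nil
    exact .inl ⟨rfl, rfl⟩
  | k + 2, _ =>
    have ht := (IsNonincWord.cons_iff.1 hl).2.2
    obtain ⟨t, rfl⟩ := exists_eq_cons_of_cons_cons ht h
    exact .inr ⟨k, rfl, t, (IsNonincWord.cons_iff.1 ht).2.2, rfl⟩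

end ParksBelow

/-- The non-increasing preference lists of `m` cars that fill the spots `1, …, m` of a street on
which exactly the spots from `m + 1` on are taken. The recursion splits off either the first car, in
spot `m`, or the first three, in the top three free spots. -/
def fillingLists : ℕ → Finset (List ℕ)
  | 0 => {[]}
  | 1 => {[2], [1]}
  | 2 => {[3, 2], [3, 1], [2, 2], [2, 1], [1, 1]}
  | m + 3 =>
    (fillingLists (m + 2)).image ((m + 4) :: ·) ∪ (fillingLists (m + 2)).image ((m + 3) :: ·) ∪
      (fillingLists m).image fun t => (m + 2) :: (m + 2) :: (m + 2) :: t

theorem mem_fillingLists_succ {m : ℕ} {l : List ℕ} :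
    l ∈ fillingLists (m + 1) ↔
      (∃ t ∈ fillingLists m, l = (m + 2) :: t) ∨ (∃ t ∈ fillingLists m, l = (m + 1) :: t) ∨
        (m = 1 ∧ l = [1, 1]) ∨
          ∃ k, m = k + 2 ∧ ∃ t ∈ fillingLists k, l = m :: m :: m :: t := by
  match m with
  | 0 => simp [fillingLists]
  | 1 => simp [fillingLists, or_assoc]
  | k + 2 => simp [fillingLists, eq_comm]

theorem isNonincWord_of_mem_fillingLists {m : ℕ} {l : List ℕ} (hl : l ∈ fillingLists m) :
    IsNonincWord m (m + 1) l := by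
  induction m using Nat.strong_induction_on generalizing l with
  | _ m ih =>
    rcases m with _ | m
    · rw [Finset.mem_singleton.1 hl]
      exact .nil
    rcases mem_fillingLists_succ.1 hl with
      ⟨t, ht, rfl⟩ | ⟨t, ht, rfl⟩ | ⟨rfl, rfl⟩ | ⟨k, rfl, t, ht, rfl⟩
    · have := (ih m (by omega) ht).mono (Nat.le_succ _)
      simpa [IsNonincWord.cons_iff] using this
    · have := ih m (by omega) ht
      simpa [IsNonincWord.cons_iff] using this
    · simp [IsNonincWord.cons_iff, IsNonincWord.nil]
    · have := (ih k (by omega) ht).mono (Nat.le_succ _)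
      simpa [IsNonincWord.cons_iff] using this

theorem parksBelow_of_mem_fillingLists {n m : ℕ} {l : List ℕ} (hmn : m ≤ n)
    (hln : ∀ x ∈ l, x ≤ n) (hl : l ∈ fillingLists m) : ParksBelow n m l := by
  induction m using Nat.strong_induction_on generalizing l with
  | _ m ih =>
    rcases m with _ | m
    · rw [Finset.mem_singleton.1 hl]
      rfl
    rcases mem_fillingLists_succ.1 hl with
      ⟨t, ht, rfl⟩ | ⟨t, ht, rfl⟩ | ⟨rfl, rfl⟩ | ⟨k, rfl, t, ht, rfl⟩
    · rw [List.forall_mem_cons] at hln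
      exact (ParksBelow.cons_add_two_iff hln.1).2 (ih m (by omega) (by omega) hln.2 ht)
    · rw [List.forall_mem_cons] at hln
      exact (ParksBelow.cons_add_one_iff hmn).2 (ih m (by omega) (by omega) hln.2 ht)
    · exact ParksBelow.one_one hmn
    · simp only [List.forall_mem_cons] at hln
      exact (ParksBelow.cons_cons_cons_iff hmn).2 (ih k (by omega) (by omega) hln.2.2.2 ht)

theorem mem_fillingLists_of_parksBelow {n m : ℕ} {l : List ℕ} (hmn : m ≤ n)
    (hl : IsNonincWord m n l) (h : ParksBelow n m l) : l ∈ fillingLists m := by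
  induction m using Nat.strong_induction_on generalizing l with
  | _ m ih =>
    rcases m with _ | m
    · simp [hl.eq_nil, fillingLists]
    obtain ⟨p, t, rfl⟩ := hl.exists_eq_cons
    obtain ⟨hp, hpn, ht⟩ := IsNonincWord.cons_iff.1 hl
    have ihm : ParksBelow n m t → t ∈ fillingLists m := ih m (by omega) (by omega) (ht.mono hpn)
    rw [mem_fillingLists_succ]
    obtain hpm | rfl | rfl | hpm : p ≤ m ∨ p = m + 1 ∨ p = m + 2 ∨ m + 2 < p := by omega
    · rcases ParksBelow.one_one_or_exists_triple ht hp hpm h with h11 | ⟨k, rfl, t', ht', heq⟩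
      · exact .inr (.inr (.inl h11))
      · rw [heq, ParksBelow.cons_cons_cons_iff hmn] at h
        have := ih k (by omega) (by omega) (ht'.mono (by omega)) h
        exact .inr (.inr (.inr ⟨k, rfl, t', this, heq⟩))
    · exact .inr (.inl ⟨t, ihm ((ParksBelow.cons_add_one_iff hmn).1 h), rfl⟩)
    · exact .inl ⟨t, ihm ((ParksBelow.cons_add_two_iff hpn).1 h), rfl⟩
    · exact absurd h (ParksBelow.not_cons_of_lt hpm hpn)

theorem card_fillingLists_add_three (m : ℕ) : (fillingLists (m + 3)).card =
    2 * (fillingLists (m + 2)).card + (fillingLists m).card := by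
  have htriple : Function.Injective fun t : List ℕ => (m + 2) :: (m + 2) :: (m + 2) :: t :=
    fun s t h => by simpa using h
  rw [fillingLists, Finset.card_union_of_disjoint, Finset.card_union_of_disjoint,
    Finset.card_image_of_injective _ List.cons_injective,
    Finset.card_image_of_injective _ List.cons_injective,
    Finset.card_image_of_injective _ htriple, two_mul]
  all_goals
    simp only [Finset.disjoint_left, Finset.mem_union, Finset.mem_image]
    grind

theorem card_filter_fillingLists_add (m : ℕ) :
    ((fillingLists (m + 1)).filter fun l => ∀ x ∈ l, x ≤ m + 1).card + (fillingLists m).card =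
      (fillingLists (m + 1)).card := by
  have hcompl : (fillingLists (m + 1)).filter (fun l => ¬ ∀ x ∈ l, x ≤ m + 1) =
      (fillingLists m).image ((m + 2) :: ·) := by
    ext l
    simp only [Finset.mem_filter, Finset.mem_image]
    constructor
    · rintro ⟨hl, hlarge⟩
      have hex : ∃ x ∈ l, m + 2 ≤ x := by
        push Not at hlarge
        exact hlarge
      obtain ⟨t, rfl⟩ := (isNonincWord_of_mem_fillingLists hl).exists_eq_cons_of_le_mem hex
      exact ⟨t, by grind [mem_fillingLists_succ], rfl⟩
    · rintro ⟨t, ht, rfl⟩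
      exact ⟨mem_fillingLists_succ.2 (.inl ⟨t, ht, rfl⟩), by simp⟩
  rw [← Finset.card_image_of_injective (fillingLists m) (List.cons_injective (a := m + 2)),
    ← hcompl, Finset.card_filter_add_card_filter_not]

section PrefList

variable {m n : ℕ}

theorem prefList_injective : Function.Injective (prefList : (Fin m → Fin n) → List ℕ) :=
  fun _ _ h => funext fun i =>
    Fin.ext (Nat.add_right_cancel (congrFun (List.ofFn_injective h) i))

theorem isNonincWord_prefList_iff {α : Fin m → Fin n} :
    IsNonincWord m n (prefList α) ↔ ∀ i j, i ≤ j → α j ≤ α i := by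
  constructor
  · intro h i j hij
    rcases hij.eq_or_lt with rfl | hij
    · exact le_rfl
    · exact Nat.le_of_succ_le_succ (List.pairwise_ofFn.1 h.pairwise hij)
  · intro h
    exact ⟨List.length_ofFn, List.pairwise_ofFn.2 fun i j hij => Nat.succ_le_succ (h i j hij.le),
      List.forall_mem_ofFn_iff.2 fun i => ⟨Nat.le_add_left 1 _, (α i).isLt⟩⟩

theorem exists_prefList_eq {l : List ℕ} (hlen : l.length = m) (hl : ∀ x ∈ l, 1 ≤ x ∧ x ≤ n) :
    ∃ α : Fin m → Fin n, prefList α = l := by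
  subst hlen
  have hget (i : Fin l.length) : 1 ≤ l.get i ∧ l.get i ≤ n := hl _ (l.get_mem i)
  refine ⟨fun i => ⟨l.get i - 1, by have := hget i; omega⟩, ?_⟩
  conv_rhs => rw [← List.ofFn_get l]
  exact congrArg List.ofFn (funext fun i => Nat.sub_add_cancel (hget i).1)

end PrefList

theorem mem_VPFdown_iff {n : ℕ} {α : Fin n → Fin n} :
    α ∈ VPFdown n ↔ ParksBelow n n (prefList α) ∧ IsNonincWord n n (prefList α) := by
  simp [VPFdown, VPF, VPFk, ParksBelow, isNonincWord_prefList_iff]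

theorem image_prefList_VPFdown (n : ℕ) :
    (VPFdown n).image prefList = (fillingLists n).filter fun l => ∀ x ∈ l, x ≤ n := by
  ext l
  simp only [Finset.mem_image, Finset.mem_filter, mem_VPFdown_iff]
  constructor
  · rintro ⟨α, ⟨hpark, hword⟩, rfl⟩
    exact ⟨mem_fillingLists_of_parksBelow le_rfl hword hpark, fun x hx => (hword.mem_bounds x hx).2⟩
  · rintro ⟨hl, hln⟩
    have hword := isNonincWord_of_mem_fillingLists hl
    have hbounds : ∀ x ∈ l, 1 ≤ x ∧ x ≤ n := fun x hx => ⟨(hword.mem_bounds x hx).1, hln x hx⟩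
    obtain ⟨α, rfl⟩ := exists_prefList_eq hword.length_eq hbounds
    exact ⟨α, ⟨parksBelow_of_mem_fillingLists le_rfl hln hl, hword.length_eq, hword.pairwise,
      hbounds⟩, rfl⟩

theorem card_VPFdown_succ_add (n : ℕ) :
    (VPFdown (n + 1)).card + (fillingLists n).card = (fillingLists (n + 1)).card := by
  rw [← card_filter_fillingLists_add, ← image_prefList_VPFdown,
    Finset.card_image_of_injective _ prefList_injective]

theorem card_VPFdown_one : (VPFdown 1).card = 1 :=
  Nat.add_right_cancel (card_VPFdown_succ_add 0)

theorem card_VPFdown_two : (VPFdown 2).card = 3 :=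
  Nat.add_right_cancel (card_VPFdown_succ_add 1)

theorem card_VPFdown_three : (VPFdown 3).card = 6 :=
  Nat.add_right_cancel ((card_VPFdown_succ_add 2).trans (card_fillingLists_add_three 0))

theorem card_VPFdown_add_four (n : ℕ) :
    (VPFdown (n + 4)).card = 2 * (VPFdown (n + 3)).card + (VPFdown (n + 1)).card := by
  have hrec₀ := card_fillingLists_add_three n
  have hrec₁ : (fillingLists (n + 4)).card =
    2 * (fillingLists (n + 3)).card + (fillingLists (n + 1)).card :=
    card_fillingLists_add_three (n + 1)
  have hcard₀ := card_VPFdown_succ_add n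
  have hcard₂ : (VPFdown (n + 3)).card + (fillingLists (n + 2)).card =
    (fillingLists (n + 3)).card := card_VPFdown_succ_add (n + 2)
  have hcard₃ : (VPFdown (n + 4)).card + (fillingLists (n + 3)).card =
    (fillingLists (n + 4)).card := card_VPFdown_succ_add (n + 3)
  omega

theorem ne_zero_of_mul_mul_eq_one {M₀ : Type*} [MulZeroOneClass M₀] [Nontrivial M₀] {a b c : M₀}
    (h : a * b * c = 1) : a ≠ 0 ∧ b ≠ 0 ∧ c ≠ 0 := by
  refine ⟨?_, ?_, ?_⟩ <;> rintro rfl <;> simp at h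

theorem vieta_of_monic_cubic {R : Type*} [CommRing R] [IsDomain R] {a b c r s t : R}
    (hr : r ^ 3 + a * r ^ 2 + b * r + c = 0) (hs : s ^ 3 + a * s ^ 2 + b * s + c = 0)
    (ht : t ^ 3 + a * t ^ 2 + b * t + c = 0) (hrs : r ≠ s) (hrt : r ≠ t) (hst : s ≠ t) :
    r + s + t = -a ∧ r * s + r * t + s * t = b ∧ r * s * t = -c := by
  have hquot_rs : r ^ 2 + r * s + s ^ 2 + a * (r + s) + b = 0 :=
    mul_left_cancel₀ (sub_ne_zero.2 hrs) (by linear_combination hr - hs)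
  have hquot_rt : r ^ 2 + r * t + t ^ 2 + a * (r + t) + b = 0 :=
    mul_left_cancel₀ (sub_ne_zero.2 hrt) (by linear_combination hr - ht)
  have hsum : r + s + t = -a :=
    mul_left_cancel₀ (sub_ne_zero.2 hst) (by linear_combination hquot_rs - hquot_rt)
  have hpairs : r * s + r * t + s * t = b := by
    linear_combination (r + s) * hsum - hquot_rs
  refine ⟨hsum, hpairs, ?_⟩
  linear_combination hr - r ^ 2 * hsum + r * hpairs

/-- The sum of the residues of the rational function `x ^ j / ((x - r) (x - s) (x - t))` at `r`, `s`
and `t`, for distinct `r`, `s`, `t`. In terms of complete homogeneous symmetric polynomials it is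
`h_{j-2}(r, s, t)`, extended to negative `j`. -/
def residueSum {K : Type*} [Field K] (r s t : K) (j : ℤ) : K :=
  r ^ j / ((r - s) * (r - t)) + s ^ j / ((s - r) * (s - t)) + t ^ j / ((t - r) * (t - s))

section ResidueSum

variable {K : Type*} [Field K] {r s t : K}

theorem residueSum_zero (hrs : r ≠ s) (hrt : r ≠ t) (hst : s ≠ t) : residueSum r s t 0 = 0 := by
  simp only [residueSum, zpow_zero]
  grind

theorem residueSum_one (hrs : r ≠ s) (hrt : r ≠ t) (hst : s ≠ t) : residueSum r s t 1 = 0 := by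
  simp only [residueSum, zpow_one]
  grind

theorem residueSum_two (hrs : r ≠ s) (hrt : r ≠ t) (hst : s ≠ t) : residueSum r s t 2 = 1 := by
  simp only [residueSum, zpow_ofNat]
  grind

theorem residueSum_add_three (hr : r ≠ 0) (hs : s ≠ 0) (ht : t ≠ 0) (j : ℤ) :
    residueSum r s t (j + 3) = (r + s + t) * residueSum r s t (j + 2) -
      (r * s + r * t + s * t) * residueSum r s t (j + 1) + r * s * t * residueSum r s t j := by
  have hpow {x : K} (hx : x ≠ 0) : x ^ (j + 3) = x ^ j * x ^ 3 ∧ x ^ (j + 2) = x ^ j * x ^ 2 ∧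
      x ^ (j + 1) = x ^ j * x :=
    ⟨mod_cast zpow_add₀ hx j 3, mod_cast zpow_add₀ hx j 2, zpow_add_one₀ hx j⟩
  simp only [residueSum, hpow hr, hpow hs, hpow ht]
  ring

end ResidueSum

section ClosedForm

variable {K : Type*} [Field K] {ρ₁ ρ₂ ρ₃ : K}

theorem residueSum_eq_two_mul_add (hsum : ρ₁ + ρ₂ + ρ₃ = 0)
    (hpairs : ρ₁ * ρ₂ + ρ₁ * ρ₃ + ρ₂ * ρ₃ = 2) (hprod : ρ₁ * ρ₂ * ρ₃ = 1) (j : ℤ) :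
    residueSum ρ₁ ρ₂ ρ₃ j =
      2 * residueSum ρ₁ ρ₂ ρ₃ (j + 1) + residueSum ρ₁ ρ₂ ρ₃ (j + 3) := by
  obtain ⟨hne₁, hne₂, hne₃⟩ := ne_zero_of_mul_mul_eq_one hprod
  have h := residueSum_add_three hne₁ hne₂ hne₃ j
  rw [hsum, hpairs, hprod] at h
  linear_combination -h

theorem card_VPFdown_eq_residueSum_add (hsum : ρ₁ + ρ₂ + ρ₃ = 0)
    (hpairs : ρ₁ * ρ₂ + ρ₁ * ρ₃ + ρ₂ * ρ₃ = 2) (hprod : ρ₁ * ρ₂ * ρ₃ = 1)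
    (h₁₂ : ρ₁ ≠ ρ₂) (h₁₃ : ρ₁ ≠ ρ₃) (h₂₃ : ρ₂ ≠ ρ₃) {n : ℕ} (hn : 1 ≤ n) :
    ((VPFdown n).card : K) = residueSum ρ₁ ρ₂ ρ₃ (-n) + residueSum ρ₁ ρ₂ ρ₃ (-n + 1) := by
  have hrec := residueSum_eq_two_mul_add hsum hpairs hprod
  have w₀ := residueSum_zero h₁₂ h₁₃ h₂₃
  have w₁ := residueSum_one h₁₂ h₁₃ h₂₃
  have w₂ := residueSum_two h₁₂ h₁₃ h₂₃
  have v₁ : residueSum ρ₁ ρ₂ ρ₃ (-1) = 1 := by rw [hrec]; norm_num [w₀, w₂]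
  have v₂ : residueSum ρ₁ ρ₂ ρ₃ (-2) = 2 := by rw [hrec]; norm_num [v₁, w₁]
  have v₃ : residueSum ρ₁ ρ₂ ρ₃ (-3) = 4 := by rw [hrec]; norm_num [v₂, w₀]
  induction n using Nat.strong_induction_on with
  | _ n ih =>
    match n, hn with
    | 1, _ => norm_num [card_VPFdown_one, w₀, v₁]
    | 2, _ => norm_num [card_VPFdown_two, v₁, v₂]
    | 3, _ => norm_num [card_VPFdown_three, v₂, v₃]
    | n + 4, _ =>
      rw [card_VPFdown_add_four, Nat.cast_add, Nat.cast_mul, ih (n + 3) (by omega) (by omega),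
        ih (n + 1) (by omega) (by omega), hrec (-(n + 4 : ℕ) + 1), hrec (-(n + 4 : ℕ))]
      push_cast
      ring_nf

theorem sq_add_self_mul_zpow_neg {x : K} (hx : x ≠ 0) (j : ℤ) :
    (x ^ 2 + x) * x ^ (-(j + 1)) = x ^ (-j) + x ^ (-j + 1) := by
  have hexp : -j = -(j + 1) + 1 := by ring
  rw [hexp, zpow_add_one₀ (n := _ + 1) hx, zpow_add_one₀ hx]
  ring

theorem vpfdown_card_closed_form_general
    (h₁ : ρ₁ ^ 3 + 2 * ρ₁ - 1 = 0) (h₂ : ρ₂ ^ 3 + 2 * ρ₂ - 1 = 0)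
    (h₃ : ρ₃ ^ 3 + 2 * ρ₃ - 1 = 0)
    (h₁₂ : ρ₁ ≠ ρ₂) (h₁₃ : ρ₁ ≠ ρ₃) (h₂₃ : ρ₂ ≠ ρ₃)
    {n : ℕ} (hn : 1 ≤ n) :
    ((VPFdown n).card : K) =
      (ρ₁ ^ 2 + ρ₁) / (3 * ρ₁ ^ 2 + 2) * ρ₁ ^ (-((n : ℤ) + 1)) +
        (ρ₂ ^ 2 + ρ₂) / (3 * ρ₂ ^ 2 + 2) * ρ₂ ^ (-((n : ℤ) + 1)) +
        (ρ₃ ^ 2 + ρ₃) / (3 * ρ₃ ^ 2 + 2) * ρ₃ ^ (-((n : ℤ) + 1)) := by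
  obtain ⟨hsum, hpairs, hprod⟩ := vieta_of_monic_cubic (a := 0) (b := 2) (c := -1)
    (by linear_combination h₁) (by linear_combination h₂) (by linear_combination h₃) h₁₂ h₁₃ h₂₃
  rw [neg_zero] at hsum
  rw [neg_neg] at hprod
  obtain ⟨hne₁, hne₂, hne₃⟩ := ne_zero_of_mul_mul_eq_one hprod
  have hderiv₁ : 3 * ρ₁ ^ 2 + 2 = (ρ₁ - ρ₂) * (ρ₁ - ρ₃) := by
    linear_combination 2 * ρ₁ * hsum - hpairs
  have hderiv₂ : 3 * ρ₂ ^ 2 + 2 = (ρ₂ - ρ₁) * (ρ₂ - ρ₃) := by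
    linear_combination 2 * ρ₂ * hsum - hpairs
  have hderiv₃ : 3 * ρ₃ ^ 2 + 2 = (ρ₃ - ρ₁) * (ρ₃ - ρ₂) := by
    linear_combination 2 * ρ₃ * hsum - hpairs
  rw [card_VPFdown_eq_residueSum_add hsum hpairs hprod h₁₂ h₁₃ h₂₃ hn, residueSum, residueSum,
    div_mul_eq_mul_div, div_mul_eq_mul_div, div_mul_eq_mul_div, sq_add_self_mul_zpow_neg hne₁,
    sq_add_self_mul_zpow_neg hne₂, sq_add_self_mul_zpow_neg hne₃, hderiv₁, hderiv₂, hderiv₃]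
  ring

end ClosedForm

/-- If `ρ₁, ρ₂, ρ₃ ∈ ℂ` are the three distinct complex roots of
`x³ + 2x − 1`, then for every `n ≥ 1`,
`|VPF_n^↓| = ∑_{j=1}^{3} ((ρⱼ² + ρⱼ)/(3ρⱼ² + 2))·ρⱼ^{−(n+1)}`. -/
theorem vpfdown_card_closed_form (ρ₁ ρ₂ ρ₃ : ℂ)
    (h₁ : ρ₁ ^ 3 + 2 * ρ₁ - 1 = 0) (h₂ : ρ₂ ^ 3 + 2 * ρ₂ - 1 = 0)
    (h₃ : ρ₃ ^ 3 + 2 * ρ₃ - 1 = 0)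
    (h₁₂ : ρ₁ ≠ ρ₂) (h₁₃ : ρ₁ ≠ ρ₃) (h₂₃ : ρ₂ ≠ ρ₃)
    (n : ℕ) (hn : 1 ≤ n) :
    ((VPFdown n).card : ℂ) =
      (ρ₁ ^ 2 + ρ₁) / (3 * ρ₁ ^ 2 + 2) * ρ₁ ^ (-((n : ℤ) + 1)) +
        (ρ₂ ^ 2 + ρ₂) / (3 * ρ₂ ^ 2 + 2) * ρ₂ ^ (-((n : ℤ) + 1)) +
        (ρ₃ ^ 2 + ρ₃) / (3 * ρ₃ ^ 2 + 2) * ρ₃ ^ (-((n : ℤ) + 1)) :=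
  vpfdown_card_closed_form_general h₁ h₂ h₃ h₁₂ h₁₃ h₂₃ hn
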